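/- Let N ≥ 2, α ∈ (0,N), R > 0, and let Ω and Ω_n (n ∈ ℕ) be Lebesgue-measurable subsets of the ball B_R(0) such that |Ω_n Δ Ω| → 0 as n → ∞. Then V_α(Ω_n) → V_α(Ω) as n → ∞; that is, the Riesz energy is continuous with respect to L¹ convergence of equibounded sets. Moreover one has the quantitative estimate |V_α(Ω_n) − V_α(Ω)| ≤ C₀ · |Ω_n Δ Ω| · ( |Ω|^{α/N} + |Ω_n|^{α/N} ), where C₀ = ∫_B |z|^{α−N} dz and B is the ball centered at the origin with Lebesgue measure 1. -/

import Mathlib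

open MeasureTheory Metric Filter

/-! The potential `U_A x = ∫_A |x - y|^(α-N) dy` of a set `A` is at most its value for `A` replaced
by the ball centred at `x` with the same measure, because the kernel decreases with distance
(bathtub principle); by scaling this value is `C₀ |A|^(α/N)`. The kernel being symmetric,
`∫_B U_A = ∫_A U_B`, hence

`V(A) - V(B) = (∫_A U_A - ∫_B U_A) + (∫_A U_B - ∫_B U_B)`,

and each difference is at most `sup U * |A ∆ B|`. -/

open Set Module
open scoped ENNReal Topology symmDiff Pointwise

section MeasureSpace

variable {X : Type*} [MeasurableSpace X] {μ : Measure X} {A B : Set X}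

lemma setLIntegral_le_setLIntegral_of_measure_le {f : X → ℝ≥0∞} {c : ℝ≥0∞}
    (hA : NullMeasurableSet A μ) (hB : NullMeasurableSet B μ) (hA_fin : μ A ≠ ∞)
    (hAB : μ A ≤ μ B) (hle : ∀ᵐ x ∂μ, x ∈ A \ B → f x ≤ c) (hge : ∀ᵐ x ∂μ, x ∈ B \ A → c ≤ f x) :
    ∫⁻ x in A, f x ∂μ ≤ ∫⁻ x in B, f x ∂μ := by
  have h_diff : μ (A \ B) ≤ μ (B \ A) := by
    rw [← measure_inter_add_sdiff₀ A hB, ← measure_inter_add_sdiff₀ B hA, inter_comm B A] at hAB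
    exact (ENNReal.add_le_add_iff_left (measure_ne_top_of_subset inter_subset_left hA_fin)).1 hAB
  rw [← Measure.restrict_inter_add_sdiff₀ A hB, ← Measure.restrict_inter_add_sdiff₀ B hA,
    lintegral_add_measure, lintegral_add_measure, inter_comm B A]
  refine add_le_add le_rfl ?_
  calc ∫⁻ x in A \ B, f x ∂μ
    _ ≤ ∫⁻ _ in A \ B, c ∂μ := lintegral_mono_ae ((ae_restrict_iff'₀ (hA.diff hB)).2 hle)
    _ ≤ ∫⁻ _ in B \ A, c ∂μ := by simpa only [setLIntegral_const] using by gcongr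
    _ ≤ ∫⁻ x in B \ A, f x ∂μ := lintegral_mono_ae ((ae_restrict_iff'₀ (hB.diff hA)).2 hge)

lemma norm_setIntegral_sub_setIntegral_le {F : Type*} [NormedAddCommGroup F] [NormedSpace ℝ F]
    {g : X → F} {M : ℝ} (hA : NullMeasurableSet A μ) (hB : NullMeasurableSet B μ)
    (hA_fin : μ A ≠ ∞) (hB_fin : μ B ≠ ∞) (hgA : IntegrableOn g A μ) (hgB : IntegrableOn g B μ)
    (hM : ∀ x ∈ A ∆ B, ‖g x‖ ≤ M) :
    ‖∫ x in A, g x ∂μ - ∫ x in B, g x ∂μ‖ ≤ M * μ.real (A ∆ B) := by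
  have hAB_fin : μ (A \ B) ≠ ∞ := measure_ne_top_of_subset sdiff_subset hA_fin
  have hBA_fin : μ (B \ A) ≠ ∞ := measure_ne_top_of_subset sdiff_subset hB_fin
  have h_symmDiff : μ.real (A ∆ B) = μ.real (A \ B) + μ.real (B \ A) := by
    simp only [measureReal_def, measure_symmDiff_eq hA hB, ENNReal.toReal_add hAB_fin hBA_fin]
  rw [← integral_inter_add_sdiff₀ hB hgA, ← integral_inter_add_sdiff₀ hA hgB, inter_comm B A,
    add_sub_add_left_eq_sub, h_symmDiff, mul_add]
  exact norm_sub_le_of_le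
    (norm_setIntegral_le_of_norm_le_const hAB_fin.lt_top fun x hx => hM x (.inl hx))
    (norm_setIntegral_le_of_norm_le_const hBA_fin.lt_top fun x hx => hM x (.inr hx))

end MeasureSpace

lemma setLIntegral_dist_le_setLIntegral_ball {X : Type*} [MetricSpace X] [MeasurableSpace X]
    [OpensMeasurableSpace X] {μ : Measure X} [NullSingletonClass μ] {φ : ℝ → ℝ≥0∞}
    (hφ : AntitoneOn φ (Ioi 0)) {A : Set X} (hA : NullMeasurableSet A μ) (hA_fin : μ A ≠ ∞)
    {x : X} {ρ : ℝ} (hAρ : μ A ≤ μ (ball x ρ)) :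
    ∫⁻ y in A, φ (dist x y) ∂μ ≤ ∫⁻ y in ball x ρ, φ (dist x y) ∂μ := by
  rcases le_or_gt ρ 0 with hρ | hρ
  · rw [ball_eq_empty.2 hρ, measure_empty] at hAρ
    rw [setLIntegral_measure_zero A _ (le_antisymm hAρ zero_le)]
    exact zero_le
  refine setLIntegral_le_setLIntegral_of_measure_le (c := φ ρ) hA
    measurableSet_ball.nullMeasurableSet hA_fin hAρ (.of_forall fun y hy => ?_) ?_
  · have hρy : ρ ≤ dist x y := by simpa [dist_comm] using hy.2
    exact hφ hρ (hρ.trans_le hρy) hρy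
  · filter_upwards [Measure.ae_ne μ x] with y hyx hy
    exact hφ (dist_pos.2 hyx.symm) hρ (mem_ball'.1 hy.1).le

lemma nontrivial_of_mem_Ioc_finrank {E : Type*} [AddCommGroup E] [Module ℝ E] {α : ℝ}
    (hα : α ∈ Ioc 0 (finrank ℝ E : ℝ)) : Nontrivial E :=
  nontrivial_of_finrank_pos (R := ℝ) (by exact_mod_cast hα.1.trans_le hα.2)

section Riesz

variable {E : Type*} [NormedAddCommGroup E] [NormedSpace ℝ E] [MeasurableSpace E]

/-- The Riesz potential of order `α` of the set `A`, with the dimension `finrank ℝ E` as the `N` of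
the exponent `α - N`. The constant `C₀` is the potential at `0` of the centred ball of measure `1`.
-/
noncomputable def rieszPotential (μ : Measure E) (α : ℝ) (A : Set E) (x : E) : ℝ :=
  ∫ y in A, ‖x - y‖ ^ (α - finrank ℝ E) ∂μ

/-- The Riesz energy `V_α` of a set, written as the integral over the set of its own potential. -/
noncomputable def rieszEnergy (μ : Measure E) (α : ℝ) (A : Set E) : ℝ :=
  ∫ x in A, rieszPotential μ α A x ∂μ

lemma rieszPotential_nonneg (μ : Measure E) (α : ℝ) (A : Set E) (x : E) :
    0 ≤ rieszPotential μ α A x :=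
  integral_nonneg fun _ => by positivity

variable [FiniteDimensional ℝ E] [BorelSpace E] {μ : Measure E} [μ.IsAddHaarMeasure]
  {α r s : ℝ} {A B : Set E} {x : E}

lemma measurable_rieszKernel (α : ℝ) :
    Measurable fun p : E × E => ‖p.1 - p.2‖ ^ (α - finrank ℝ E) := by
  fun_prop

lemma stronglyMeasurable_rieszPotential : StronglyMeasurable (rieszPotential μ α A) :=
  (measurable_rieszKernel α).stronglyMeasurable.integral_prod_right

lemma rieszPotential_ball_eq :
    rieszPotential μ α (ball x r) x = rieszPotential μ α (ball 0 r) 0 := by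
  simp only [rieszPotential, zero_sub, norm_neg]
  rw [← integral_indicator measurableSet_ball, ← integral_indicator measurableSet_ball,
    ← integral_sub_left_eq_self _ μ x]
  congr! 2 with y
  simp [indicator, dist_eq_norm]

lemma rieszPotential_ball_mul (hα : α ≠ 0) (hs : 0 ≤ s) :
    rieszPotential μ α (ball 0 (s * r)) 0 = s ^ α * rieszPotential μ α (ball 0 r) 0 := by
  rcases hs.eq_or_lt with rfl | hs
  · simp [rieszPotential, Real.zero_rpow hα]
  have h_ball : s • ball (0 : E) r = ball 0 (s * r) := by
    rw [_root_.smul_ball hs.ne', smul_zero, Real.norm_of_nonneg hs.le]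
  have h_scale := Measure.setIntegral_comp_smul_of_pos μ
    (fun z : E => ‖z‖ ^ (α - finrank ℝ E)) (ball 0 r) hs
  simp only [h_ball, norm_smul, Real.norm_of_nonneg hs.le, Real.mul_rpow hs.le (norm_nonneg _),
    integral_const_mul, smul_eq_mul, Real.rpow_sub hs, Real.rpow_natCast] at h_scale
  simp only [rieszPotential, zero_sub, norm_neg]
  field_simp at h_scale
  exact h_scale.symm

lemma integrableOn_ball_rieszKernel (hα : α ∈ Ioc 0 (finrank ℝ E : ℝ)) :
    IntegrableOn (fun y => ‖x - y‖ ^ (α - finrank ℝ E)) (ball x r) μ := by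
  have := nontrivial_of_mem_Ioc_finrank hα
  have h_zero : IntegrableOn (fun z : E => ‖z‖ ^ (α - finrank ℝ E)) (ball 0 r) μ := by
    refine integrableOn_ball_of_norm_le_rpow (C := 1) (α := finrank ℝ E - α) finrank_pos
      (sub_lt_self _ hα.1) (.of_forall fun z => ?_)
      (by fun_prop : Measurable fun z : E => ‖z‖ ^ (α - finrank ℝ E)).aestronglyMeasurable
    rw [Real.norm_of_nonneg (by positivity), one_mul, neg_sub]
  rw [← integrable_indicator_iff measurableSet_ball] at h_zero ⊢
  refine (h_zero.comp_sub_left x).congr (.of_forall fun y => ?_)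
  simp [indicator, dist_eq_norm, norm_sub_rev y x]

lemma setLIntegral_rieszKernel_le_ball [Nontrivial E] (hα : α ≤ finrank ℝ E)
    (hA : NullMeasurableSet A μ) (hA_fin : μ A ≠ ∞) (hAr : μ A ≤ μ (ball x r)) :
    ∫⁻ y in A, ENNReal.ofReal (‖x - y‖ ^ (α - finrank ℝ E)) ∂μ ≤
      ∫⁻ y in ball x r, ENNReal.ofReal (‖x - y‖ ^ (α - finrank ℝ E)) ∂μ := by
  simp only [← dist_eq_norm]
  exact setLIntegral_dist_le_setLIntegral_ball
    (φ := fun t => ENNReal.ofReal (t ^ (α - finrank ℝ E)))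
    (ENNReal.ofReal_mono.comp_antitoneOn
      (Real.antitoneOn_rpow_Ioi_of_exponent_nonpos (sub_nonpos.2 hα))) hA hA_fin hAr

lemma measure_ball_rpow_mul [Nontrivial E] {m : ℝ≥0∞} (hm : m ≠ ∞) (hr : 0 < r) :
    μ (ball x ((m.toReal / μ.real (ball 0 r)) ^ (finrank ℝ E : ℝ)⁻¹ * r)) = m := by
  have h_ball : μ (ball 0 r) ≠ 0 := (measure_ball_pos μ 0 hr).ne'
  rw [Measure.addHaar_ball_mul μ x (by positivity),
    Real.rpow_inv_natCast_pow (by positivity) finrank_pos.ne', measureReal_def,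
    ← ENNReal.toReal_div, ENNReal.ofReal_toReal (ENNReal.div_ne_top hm h_ball),
    ENNReal.div_mul_cancel h_ball measure_ball_lt_top.ne]

lemma integrableOn_rieszKernel (hα : α ∈ Ioc 0 (finrank ℝ E : ℝ)) (hA : NullMeasurableSet A μ)
    (hA_fin : μ A ≠ ∞) : IntegrableOn (fun y => ‖x - y‖ ^ (α - finrank ℝ E)) A μ := by
  have := nontrivial_of_mem_Ioc_finrank hα
  have h_nonneg (s : Set E) : 0 ≤ᵐ[μ.restrict s] fun y => ‖x - y‖ ^ (α - finrank ℝ E) :=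
    .of_forall fun _ => by positivity
  refine ⟨((measurable_rieszKernel α).comp measurable_prodMk_left).aestronglyMeasurable,
    (hasFiniteIntegral_iff_ofReal (h_nonneg _)).2 ?_⟩
  exact (setLIntegral_rieszKernel_le_ball hα.2 hA hA_fin
    (measure_ball_rpow_mul (x := x) hA_fin one_pos).ge).trans_lt
    ((hasFiniteIntegral_iff_ofReal (h_nonneg _)).1 (integrableOn_ball_rieszKernel hα).2)

lemma rieszPotential_le_ball (hα : α ∈ Ioc 0 (finrank ℝ E : ℝ)) (hA : NullMeasurableSet A μ)
    (hA_fin : μ A ≠ ∞) (hAr : μ A ≤ μ (ball x r)) :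
    rieszPotential μ α A x ≤ rieszPotential μ α (ball x r) x := by
  have := nontrivial_of_mem_Ioc_finrank hα
  have h_nonneg (y : E) : 0 ≤ ‖x - y‖ ^ (α - finrank ℝ E) := by positivity
  have h_ball := integrableOn_ball_rieszKernel (μ := μ) (x := x) (r := r) hα
  refine (ENNReal.ofReal_le_ofReal_iff (rieszPotential_nonneg μ α _ x)).1 ?_
  rw [rieszPotential, rieszPotential,
    ofReal_integral_eq_lintegral_ofReal (integrableOn_rieszKernel hα hA hA_fin)
      (.of_forall h_nonneg),
    ofReal_integral_eq_lintegral_ofReal h_ball (.of_forall h_nonneg)]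
  exact setLIntegral_rieszKernel_le_ball hα.2 hA hA_fin hAr

lemma rieszPotential_le (hα : α ∈ Ioc 0 (finrank ℝ E : ℝ)) (hA : NullMeasurableSet A μ)
    (hA_fin : μ A ≠ ∞) (hr : 0 < r) :
    rieszPotential μ α A x ≤
      rieszPotential μ α (ball 0 r) 0 * (μ.real A / μ.real (ball 0 r)) ^ (α / finrank ℝ E) := by
  have := nontrivial_of_mem_Ioc_finrank hα
  set s := (μ.real A / μ.real (ball 0 r)) ^ (finrank ℝ E : ℝ)⁻¹ with hs
  calc rieszPotential μ α A x
    _ ≤ rieszPotential μ α (ball x (s * r)) x :=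
      rieszPotential_le_ball hα hA hA_fin (measure_ball_rpow_mul hA_fin hr).ge
    _ = s ^ α * rieszPotential μ α (ball 0 r) 0 := by
      rw [rieszPotential_ball_eq, rieszPotential_ball_mul hα.1.ne' (by positivity)]
    _ = _ := by
      rw [hs, ← Real.rpow_mul (by positivity), inv_mul_eq_div, mul_comm]

lemma norm_rieszPotential_le (hα : α ∈ Ioc 0 (finrank ℝ E : ℝ)) (hA : NullMeasurableSet A μ)
    (hA_fin : μ A ≠ ∞) (hr : 0 < r) :
    ‖rieszPotential μ α A x‖ ≤
      rieszPotential μ α (ball 0 r) 0 * (μ.real A / μ.real (ball 0 r)) ^ (α / finrank ℝ E) :=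
  (Real.norm_of_nonneg (rieszPotential_nonneg μ α A x)).trans_le (rieszPotential_le hα hA hA_fin hr)

lemma integrableOn_rieszPotential (hα : α ∈ Ioc 0 (finrank ℝ E : ℝ)) (hA : NullMeasurableSet A μ)
    (hA_fin : μ A ≠ ∞) (hB_fin : μ B ≠ ∞) : IntegrableOn (rieszPotential μ α A) B μ :=
  Measure.integrableOn_of_bounded hB_fin stronglyMeasurable_rieszPotential.aestronglyMeasurable
    (.of_forall fun _ => norm_rieszPotential_le hα hA hA_fin one_pos)

lemma setIntegral_rieszPotential_comm (hα : α ∈ Ioc 0 (finrank ℝ E : ℝ))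
    (hA : NullMeasurableSet A μ) (hA_fin : μ A ≠ ∞) (hB_fin : μ B ≠ ∞) :
    ∫ x in B, rieszPotential μ α A x ∂μ = ∫ x in A, rieszPotential μ α B x ∂μ := by
  have h_int : Integrable (fun p : E × E => ‖p.1 - p.2‖ ^ (α - finrank ℝ E))
      ((μ.restrict B).prod (μ.restrict A)) := by
    refine (integrable_prod_iff (measurable_rieszKernel α).aestronglyMeasurable).2
      ⟨.of_forall fun x => integrableOn_rieszKernel hα hA hA_fin, ?_⟩
    simp only [Real.norm_of_nonneg (Real.rpow_nonneg (norm_nonneg _) _)]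
    exact integrableOn_rieszPotential hα hA hA_fin hB_fin
  simp only [rieszPotential]
  rw [integral_integral_swap h_int]
  simp only [norm_sub_rev]

theorem abs_rieszEnergy_sub_le (hα : α ∈ Ioc 0 (finrank ℝ E : ℝ)) (hA : NullMeasurableSet A μ)
    (hB : NullMeasurableSet B μ) (hA_fin : μ A ≠ ∞) (hB_fin : μ B ≠ ∞) (hr : 0 < r) :
    |rieszEnergy μ α A - rieszEnergy μ α B| ≤
      rieszPotential μ α (ball 0 r) 0 * μ.real (A ∆ B) *
        ((μ.real B / μ.real (ball 0 r)) ^ (α / finrank ℝ E) +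
          (μ.real A / μ.real (ball 0 r)) ^ (α / finrank ℝ E)) := by
  have h_diff {S : Set E} (hS : NullMeasurableSet S μ) (hS_fin : μ S ≠ ∞) :=
    norm_setIntegral_sub_setIntegral_le hA hB hA_fin hB_fin
      (integrableOn_rieszPotential hα hS hS_fin hA_fin)
      (integrableOn_rieszPotential hα hS hS_fin hB_fin)
      fun x _ => norm_rieszPotential_le hα hS hS_fin hr
  calc |rieszEnergy μ α A - rieszEnergy μ α B|
    _ = ‖(∫ x in A, rieszPotential μ α A x ∂μ - ∫ x in B, rieszPotential μ α A x ∂μ) +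
          (∫ x in A, rieszPotential μ α B x ∂μ - ∫ x in B, rieszPotential μ α B x ∂μ)‖ := by
      rw [setIntegral_rieszPotential_comm hα hA hA_fin hB_fin, sub_add_sub_cancel, Real.norm_eq_abs,
        rieszEnergy, rieszEnergy]
    _ ≤ _ := norm_add_le_of_le (h_diff hA hA_fin) (h_diff hB hB_fin)
    _ = _ := by ring

variable {ι : Type*} {l : Filter ι} {Ω : Set E} {Ωn : ι → Set E}

theorem tendsto_rieszEnergy (hα : α ∈ Ioc 0 (finrank ℝ E : ℝ)) (hΩ : NullMeasurableSet Ω μ)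
    (hΩn : ∀ n, NullMeasurableSet (Ωn n) μ) (hΩ_fin : μ Ω ≠ ∞)
    (hconv : Tendsto (fun n => μ (Ωn n ∆ Ω)) l (𝓝 0)) :
    Tendsto (fun n => rieszEnergy μ α (Ωn n)) l (𝓝 (rieszEnergy μ α Ω)) := by
  have hΩn_fin : ∀ᶠ n in l, μ (Ωn n) ≠ ∞ :=
    (hconv.eventually_ne ENNReal.zero_ne_top).mono fun n hn =>
      (measure_ne_top_iff_of_symmDiff hn).2 hΩ_fin
  have h_symmDiff : Tendsto (fun n => μ.real (Ωn n ∆ Ω)) l (𝓝 0) :=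
    (ENNReal.tendsto_toReal ENNReal.zero_ne_top).comp hconv
  have h_measure : Tendsto (fun n => μ.real (Ωn n)) l (𝓝 (μ.real Ω)) :=
    tendsto_iff_norm_sub_tendsto_zero.2 <| squeeze_zero' (.of_forall fun _ => norm_nonneg _)
      (hΩn_fin.mono fun n hn =>
        abs_measureReal_sub_le_measureReal_symmDiff' (hΩn n) hΩ hn hΩ_fin) h_symmDiff
  have h_bound := (h_symmDiff.const_mul (rieszPotential μ α (ball 0 1) 0)).mul
    (((h_measure.div_const (μ.real (ball 0 1))).rpow_const
      (.inr (by have := hα.1; positivity : 0 ≤ α / finrank ℝ E))).const_add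
        ((μ.real Ω / μ.real (ball 0 1)) ^ (α / finrank ℝ E)))
  rw [mul_zero, zero_mul] at h_bound
  exact tendsto_iff_norm_sub_tendsto_zero.2 <| squeeze_zero' (.of_forall fun _ => norm_nonneg _)
    (hΩn_fin.mono fun n hn => abs_rieszEnergy_sub_le hα (hΩn n) hΩ hn hΩ_fin one_pos) h_bound

theorem riesz_energy_L1_continuous_general (hα : α ∈ Ioc 0 (finrank ℝ E : ℝ))
    (hΩ : NullMeasurableSet Ω μ) (hΩn : ∀ n, NullMeasurableSet (Ωn n) μ) (hΩ_fin : μ Ω ≠ ∞)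
    (hΩn_fin : ∀ n, μ (Ωn n) ≠ ∞) (hconv : Tendsto (fun n => μ (Ωn n ∆ Ω)) l (𝓝 0))
    (hr : 0 < r) :
    Tendsto (fun n => rieszEnergy μ α (Ωn n)) l (𝓝 (rieszEnergy μ α Ω)) ∧
    ∀ n, |rieszEnergy μ α (Ωn n) - rieszEnergy μ α Ω| ≤
      rieszPotential μ α (ball 0 r) 0 * μ.real (Ωn n ∆ Ω) *
        ((μ.real Ω / μ.real (ball 0 r)) ^ (α / finrank ℝ E) +
          (μ.real (Ωn n) / μ.real (ball 0 r)) ^ (α / finrank ℝ E)) :=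
  ⟨tendsto_rieszEnergy hα hΩ hΩn hΩ_fin hconv,
    fun n => abs_rieszEnergy_sub_le hα (hΩn n) hΩ (hΩn_fin n) hΩ_fin hr⟩

end Riesz

/-- For `N ≥ 2`, `α ∈ (0,N)`, `R > 0` and measurable sets
`Ω, Ω_n ⊆ B_R(0)` with `|Ω_n Δ Ω| → 0`, one has `V_α(Ω_n) → V_α(Ω)`; moreover the
quantitative estimate `|V_α(Ω_n) − V_α(Ω)| ≤ C₀ |Ω_n Δ Ω| (|Ω|^{α/N} + |Ω_n|^{α/N})`
holds, with `C₀ = ∫_B |z|^{α−N} dz`, `B` being the ball of unit measure at the origin. -/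
theorem riesz_energy_L1_continuous (N : ℕ) (hN : 2 ≤ N) (α : ℝ)
    (hα : α ∈ Set.Ioo (0 : ℝ) N) (R : ℝ) (hR : 0 < R)
    (Ω : Set (EuclideanSpace ℝ (Fin N))) (Ωn : ℕ → Set (EuclideanSpace ℝ (Fin N)))
    (hΩmeas : MeasurableSet Ω) (hΩnmeas : ∀ n, MeasurableSet (Ωn n))
    (hΩsub : Ω ⊆ ball (0 : EuclideanSpace ℝ (Fin N)) R)
    (hΩnsub : ∀ n, Ωn n ⊆ ball (0 : EuclideanSpace ℝ (Fin N)) R)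
    (hconv : Tendsto (fun n => volume (symmDiff (Ωn n) Ω)) atTop (nhds 0))
    (r : ℝ) (hr : 0 < r)
    (hball : volume (ball (0 : EuclideanSpace ℝ (Fin N)) r) = 1) :
    Tendsto (fun n => ∫ x in Ωn n, ∫ y in Ωn n, ‖x - y‖ ^ (α - N)) atTop
        (nhds (∫ x in Ω, ∫ y in Ω, ‖x - y‖ ^ (α - N))) ∧
    ∀ n : ℕ,
      |(∫ x in Ωn n, ∫ y in Ωn n, ‖x - y‖ ^ (α - N)) -
          ∫ x in Ω, ∫ y in Ω, ‖x - y‖ ^ (α - N)| ≤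
        (∫ z in ball (0 : EuclideanSpace ℝ (Fin N)) r, ‖z‖ ^ (α - N)) *
          (volume (symmDiff (Ωn n) Ω)).toReal *
          ((volume Ω).toReal ^ (α / N) + (volume (Ωn n)).toReal ^ (α / N)) := by
  have hfin {S : Set (EuclideanSpace ℝ (Fin N))} (hS : S ⊆ ball 0 R) : volume S ≠ ⊤ :=
    measure_ne_top_of_subset hS measure_ball_lt_top.ne
  simpa [rieszEnergy, rieszPotential, measureReal_def, hball] using
    riesz_energy_L1_continuous_general (by simpa using Set.Ioo_subset_Ioc_self hα)
      hΩmeas.nullMeasurableSet (fun n => (hΩnmeas n).nullMeasurableSet) (hfin hΩsub)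
      (fun n => hfin (hΩnsub n)) hconv hr
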